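/- For every integer k ≥ 2, all integers j ≥ 1 and 1 ≤ l ≤ k−1, and every integer m ≥ 0: the number of partitions of m that have difference at least 2 at distance k−1, whose smallest part is at least j, and in which the part j appears exactly k−l times, equals the number of partitions of m − (k−l)j that have difference at least 2 at distance k−1, whose smallest part is greater than j, and in which the part j+1 appears at most l−1 times (where the number of partitions of a negative integer is 0). -/

import Mathlib

/-!
A partition has difference at least 2 at distance `t` exactly when, for every `a`, at most `t` of
its parts lie in `{a, a + 1}` (`diff2AtDist_iff_count`): a window of `t + 1` consecutive parts
violates the difference condition if and only if all its entries lie in some `{a, a + 1}`.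

Given this, deleting the `k - l` parts equal to `j` is a bijection. All remaining parts
exceed `j`, and the only constraints that involve `j` are those at `a = j`, which reads
`(k - l) + count (j + 1) ≤ k - 1`, i.e. `count (j + 1) ≤ l - 1`, and at `a = j - 1`, which is
automatic since no part equals `j - 1` and `k - l ≤ k - 1`.
-/

/-- A partition of `m` has difference at least 2 at distance `t` if, writing its parts
in weakly increasing order, any two parts at distance `t` differ by at least 2
(equivalently, for the decreasing arrangement `p₁ ≥ ⋯ ≥ pₙ`, `p_s - p_{s+t} ≥ 2`
whenever `s ≥ 1` and `s + t ≤ n`). -/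
def Diff2AtDist (t : ℕ) {m : ℕ} (p : Nat.Partition m) : Prop :=
  ∀ s : ℕ, s + t < (p.parts.sort (· ≤ ·)).length →
    (p.parts.sort (· ≤ ·)).getD s 0 + 2 ≤ (p.parts.sort (· ≤ ·)).getD (s + t) 0

/-- In a weakly increasing list, the entry at index `t`, if present, is at least `c` exactly when
at most `t` entries are below `c`. -/
lemma countP_lt_le_iff (c : ℕ) (L : List ℕ) (hL : L.Pairwise (· ≤ ·)) (t : ℕ) :
    L.countP (fun y => decide (y < c)) ≤ t ↔ (t < L.length → c ≤ L.getD t 0) := by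
  induction L generalizing t with
  | nil => simp
  | cons x L ih =>
    rw [List.pairwise_cons] at hL
    obtain ⟨hx, hL⟩ := hL
    by_cases hxc : x < c
    · rw [List.countP_cons_of_pos (by simpa using hxc)]
      cases t with
      | zero => simpa using hxc
      | succ t => simpa using ih hL t
    · have h0 : L.countP (fun y => decide (y < c)) = 0 := by
        rw [List.countP_eq_zero]
        intro y hy
        have := hx y hy
        simp
        omega
      rw [List.countP_cons_of_neg (by simpa using hxc), h0]
      refine ⟨fun _ ht => ?_, fun _ => Nat.zero_le _⟩
      cases t with
      | zero => simpa using hxc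
      | succ t =>
        have ht' : t < L.length := by simpa using ht
        have := hx _ (List.getElem_mem ht')
        rw [List.getD_cons_succ, List.getD_eq_getElem _ _ ht']
        omega

lemma countP_lt_add_two (x : ℕ) (L : List ℕ) (hx : ∀ y ∈ L, x ≤ y) :
    L.countP (fun y => decide (y < x + 2)) = L.count x + L.count (x + 1) := by
  induction L with
  | nil => simp
  | cons y L ih =>
    have hy := hx y (by simp)
    have := ih fun z hz => hx z (by simp [hz])
    simp only [List.countP_cons, List.count_cons, this, beq_iff_eq, decide_eq_true_eq]
    split_ifs <;> omega

lemma list_diff2_iff_count (t : ℕ) (L : List ℕ) (hL : L.Pairwise (· ≤ ·)) :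
    (∀ s, s + t < L.length → L.getD s 0 + 2 ≤ L.getD (s + t) 0) ↔
      ∀ a, L.count a + L.count (a + 1) ≤ t := by
  induction L with
  | nil => simp
  | cons x L ih =>
    have hmin : ∀ y ∈ x :: L, x ≤ y := by
      simpa using (List.pairwise_cons.1 hL).1
    -- The window starting at the head `x` is controlled by the count at `a = x`.
    have hhead := countP_lt_le_iff (x + 2) (x :: L) hL t
    rw [countP_lt_add_two x _ hmin] at hhead
    have ih := ih (List.pairwise_cons.1 hL).2
    constructor
    · intro h a
      have h0 := hhead.2 (by simpa using h 0)
      have hL' := ih.1 (fun s hs => by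
        have := h (s + 1) (by simp; omega)
        rw [Nat.add_right_comm] at this
        simpa using this) a
      rcases lt_trichotomy a x with ha | rfl | ha
      · have hz : (x :: L).count a = 0 :=
          List.count_eq_zero.2 fun hm => by have := hmin a hm; omega
        rcases Nat.lt_or_ge (a + 1) x with hb | hb
        · have hz' : (x :: L).count (a + 1) = 0 :=
            List.count_eq_zero.2 fun hm => by have := hmin _ hm; omega
          omega
        · obtain rfl : x = a + 1 := by omega
          omega
      · exact h0
      · rwa [List.count_cons_of_ne (by omega), List.count_cons_of_ne (by omega)]
    · intro h s hs
      cases s with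
      | zero => simpa using hhead.1 (h x) (by simpa using hs)
      | succ s =>
        have := ih.2 (fun a => by
          have h1 := h a
          simp only [List.count_cons] at h1
          omega) s (by simp at hs; omega)
        rw [Nat.add_right_comm]
        simpa using this

lemma diff2AtDist_iff_count (t : ℕ) {m : ℕ} (p : Nat.Partition m) :
    Diff2AtDist t p ↔ ∀ a, p.parts.count a + p.parts.count (a + 1) ≤ t := by
  have hc (a : ℕ) : (p.parts.sort (· ≤ ·)).count a = p.parts.count a := by
    rw [← Multiset.coe_count, Multiset.sort_eq]
  simpa only [hc, Diff2AtDist] using list_diff2_iff_count t (p.parts.sort (· ≤ ·)) (p.parts.pairwise_sort _)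

/-- Combinatorial recursion behind `G_{(k−1)(j−1)+l} = G_{(k−1)(j−1)+l+1} + q^{(k−l)j} G_{(k−1)j+k−l+1}`:
for `k ≥ 2`, `j ≥ 1`, `1 ≤ l ≤ k−1` and `m ≥ 0`, the number of partitions of `m` with
difference at least 2 at distance `k−1`, smallest part at least `j`, and exactly `k−l`
parts equal to `j`, equals the number of partitions of `m − (k−l)j` with difference at
least 2 at distance `k−1`, smallest part greater than `j`, and at most `l−1` parts equal
to `j+1` (the number of partitions of a negative integer being `0`, whence the case
split on `(k−l)j ≤ m`). -/
theorem card_partitions_shift (k j l m : ℕ) (hk : 2 ≤ k) (hj : 1 ≤ j)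
    (hl1 : 1 ≤ l) (hlk : l ≤ k - 1) :
    Nat.card {p : Nat.Partition m // Diff2AtDist (k - 1) p ∧
      (∀ x ∈ p.parts, j ≤ x) ∧ p.parts.count j = k - l} =
    (if (k - l) * j ≤ m then
      Nat.card {p : Nat.Partition (m - (k - l) * j) // Diff2AtDist (k - 1) p ∧
        (∀ x ∈ p.parts, j < x) ∧ p.parts.count (j + 1) ≤ l - 1}
    else 0) := by
  simp only [diff2AtDist_iff_count]
  have hle (p : Nat.Partition m) (h : p.parts.count j = k - l) :
      Multiset.replicate (k - l) j ≤ p.parts :=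
    Multiset.le_count_iff_replicate_le.1 h.ge
  have hsum (p : Nat.Partition m) (h : p.parts.count j = k - l) :
      (p.parts - Multiset.replicate (k - l) j).sum + (k - l) * j = m := by
    have := congrArg Multiset.sum (tsub_add_cancel_of_le (hle p h))
    simpa [p.parts_sum] using this
  split_ifs with hm
  · refine Nat.card_congr
      { toFun := fun p => ⟨⟨p.1.parts - Multiset.replicate (k - l) j,
            fun hi => p.1.parts_pos (Multiset.mem_of_le tsub_le_self hi), ?_⟩, ?_, ?_, ?_⟩
        invFun := fun q => ⟨⟨q.1.parts + Multiset.replicate (k - l) j, ?_, ?_⟩, ?_, ?_, ?_⟩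
        left_inv := ?_
        right_inv := ?_ }
    · have := hsum p.1 p.2.2.2
      omega
    · intro a
      have := p.2.1 a
      simp only [Multiset.count_sub]
      omega
    · intro x hx
      have h1 := p.2.2.1 x (Multiset.mem_of_le tsub_le_self hx)
      refine lt_of_le_of_ne h1 ?_
      rintro rfl
      have h2 := Multiset.count_pos.2 hx
      rw [Multiset.count_sub, p.2.2.2, Multiset.count_replicate_self] at h2
      omega
    · have h1 := p.2.1 j
      have h2 := p.2.2.2
      simp only [Multiset.count_sub]
      omega
    · intro i hi
      rcases Multiset.mem_add.1 hi with h | h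
      · exact q.1.parts_pos h
      · rw [Multiset.eq_of_mem_replicate h]
        omega
    · rw [Multiset.sum_add, q.1.parts_sum, Multiset.sum_replicate, smul_eq_mul]
      omega
    · intro a
      have h1 := q.2.1 a
      have h2 := q.2.2.2
      have h0 (b : ℕ) (hb : b ≤ j) : q.1.parts.count b = 0 :=
        Multiset.count_eq_zero.2 fun h => by have := q.2.2.1 b h; omega
      simp only [Multiset.count_add, Multiset.count_replicate]
      rcases lt_trichotomy a j with ha | rfl | ha
      · rw [h0 a ha.le, h0 (a + 1) ha]
        split_ifs <;> omega
      · rw [h0 a le_rfl]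
        split_ifs <;> omega
      · split_ifs <;> omega
    · intro x hx
      rcases Multiset.mem_add.1 hx with h | h
      · exact (q.2.2.1 x h).le
      · exact (Multiset.eq_of_mem_replicate h).ge
    · have h0 : q.1.parts.count j = 0 :=
        Multiset.count_eq_zero.2 fun h => lt_irrefl _ (q.2.2.1 j h)
      simp [h0]
    · intro p
      exact Subtype.ext (Nat.Partition.ext (tsub_add_cancel_of_le (hle p.1 p.2.2.2)))
    · intro q
      exact Subtype.ext (Nat.Partition.ext (add_tsub_cancel_right _ _))
  · have : IsEmpty {p : Nat.Partition m // (∀ a, p.parts.count a + p.parts.count (a + 1) ≤ k - 1) ∧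
        (∀ x ∈ p.parts, j ≤ x) ∧ p.parts.count j = k - l} :=
      ⟨fun p => hm (by have := hsum p.1 p.2.2.2; omega)⟩
    exact Nat.card_of_isEmpty
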